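/- Let m ≥ 2 and let N be a symmetric lattice norm on ℝ^m (functions Fin m → ℝ) that is not proportional to the Euclidean norm. Let H be an infinite-dimensional separable real Hilbert space, and equip X = (Fin m → H) with the norm ‖f‖ = N(fun i => ‖f i‖_H). Then every surjective linear isometry T : X → X preserves disjointness in the vector sense: if f, g ∈ X satisfy ‖f i‖_H · ‖g i‖_H = 0 for every i, then ‖(T f) i‖_H · ‖(T g) i‖_H = 0 for every i. -/

import Mathlib

open scoped RealInnerProductSpace

/-- `N` is a norm on `Fin m → ℝ`. -/
def IsNorm {m : ℕ} (N : (Fin m → ℝ) → ℝ) : Prop :=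
  (∀ x, N x = 0 ↔ x = 0) ∧
  (∀ (c : ℝ) (x : Fin m → ℝ), N (c • x) = |c| * N x) ∧
  (∀ x y, N (x + y) ≤ N x + N y)

/-- `N` is a lattice norm: it depends only on coordinatewise absolute values, monotonically. -/
def IsLatticeNorm {m : ℕ} (N : (Fin m → ℝ) → ℝ) : Prop :=
  IsNorm N ∧ (∀ x, N x = N fun i => |x i|) ∧
  ∀ x y : Fin m → ℝ, (∀ i, |x i| ≤ |y i|) → N x ≤ N y

/-- `N` is a symmetric lattice norm: a lattice norm invariant under permutations. -/
def IsSymmLatticeNorm {m : ℕ} (N : (Fin m → ℝ) → ℝ) : Prop :=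
  IsLatticeNorm N ∧ ∀ (π : Equiv.Perm (Fin m)) (x : Fin m → ℝ), N (x ∘ π) = N x

/-- `A` is infinitesimally isometric for `N`. -/
def SkewOp {m : ℕ} (N : (Fin m → ℝ) → ℝ) (A : (Fin m → ℝ) → (Fin m → ℝ)) : Prop :=
  ∃ C : ℝ, 0 ≤ C ∧ ∀ x (t : ℝ), N (x + t • A x) ≤ (1 + C * t ^ 2) * N x

section norm
variable {m : ℕ} {N : (Fin m → ℝ) → ℝ}

lemma IsNorm.nonneg (h : IsNorm N) (x : Fin m → ℝ) : 0 ≤ N x := by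
  have h1 := h.2.2 x ((-1 : ℝ) • x)
  rw [h.2.1] at h1
  have h2 : N (x + (-1 : ℝ) • x) = 0 := (h.1 _).2 (by simp)
  rw [h2] at h1
  simp at h1
  linarith

lemma IsNorm.pos (h : IsNorm N) {x : Fin m → ℝ} (hx : x ≠ 0) : 0 < N x :=
  lt_of_le_of_ne (h.nonneg x) (fun h0 => hx ((h.1 x).1 h0.symm))

lemma SkewOp.add (h : IsNorm N) {A B : (Fin m → ℝ) → (Fin m → ℝ)}
    (hA : SkewOp N A) (hB : SkewOp N B) : SkewOp N (fun x => A x + B x) := by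
  obtain ⟨C, hC, hA⟩ := hA
  obtain ⟨D, hD, hB⟩ := hB
  refine ⟨2 * (C + D), by positivity, fun x t => ?_⟩
  have e : x + t • (A x + B x)
      = (1/2 : ℝ) • (x + (2 * t) • A x) + (1/2 : ℝ) • (x + (2 * t) • B x) := by
    ext k; simp; ring
  have h1 := h.2.2 ((1/2 : ℝ) • (x + (2 * t) • A x)) ((1/2 : ℝ) • (x + (2 * t) • B x))
  rw [← e, h.2.1, h.2.1] at h1
  have h2 := hA x (2 * t)
  have h3 := hB x (2 * t)
  rw [abs_of_nonneg (by norm_num : (0:ℝ) ≤ 1/2)] at h1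
  nlinarith

lemma SkewOp.smul {A : (Fin m → ℝ) → (Fin m → ℝ)}
    (hA : SkewOp N A) (c : ℝ) : SkewOp N (fun x => c • A x) := by
  obtain ⟨C, hC, hA⟩ := hA
  refine ⟨C * c ^ 2, by positivity, fun x t => ?_⟩
  have := hA x (t * c)
  rw [smul_smul]
  refine this.trans (le_of_eq ?_)
  ring

/-- conjugation by a linear isometric involution -/
lemma SkewOp.conj {A : (Fin m → ℝ) → (Fin m → ℝ)} (hA : SkewOp N A)
    (D : (Fin m → ℝ) →ₗ[ℝ] (Fin m → ℝ)) (hD : ∀ x, N (D x) = N x) (hDD : ∀ x, D (D x) = x) :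
    SkewOp N (fun x => D (A (D x))) := by
  obtain ⟨C, hC, hA⟩ := hA
  refine ⟨C, hC, fun x t => ?_⟩
  have := hA (D x) t
  rw [hD] at this
  refine le_trans (le_of_eq ?_) this
  rw [← hD (D x + _)]
  simp [hDD]

lemma lin_quad {a C : ℝ} (h : ∀ t : ℝ, 1 + t * a ≤ 1 + C * t ^ 2) : a = 0 := by
  by_contra ha
  have hC : 0 < |C| + 1 := by positivity
  have h1 := h (a / (|C| + 1) / 2)
  have h2 : C ≤ |C| := le_abs_self C
  have h3 : 0 < a ^ 2 := by positivity
  have e1 : a / (|C| + 1) / 2 * a = a ^ 2 / (|C| + 1) / 2 := by ring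
  have e2 : C * (a / (|C| + 1) / 2) ^ 2 = (a ^ 2 / (|C| + 1) / 2) * (C / (|C| + 1) / 2) := by ring
  rw [e1, e2] at h1
  have h4 : 0 < a ^ 2 / (|C| + 1) / 2 := by positivity
  have h5 : C / (|C| + 1) / 2 < 1 := by
    rw [div_div, div_lt_one (by positivity)]; nlinarith [abs_nonneg C]
  nlinarith

lemma SkewOp.eigen (h : IsNorm N) {A : (Fin m → ℝ) → (Fin m → ℝ)} (hA : SkewOp N A)
    {x : Fin m → ℝ} (hx : x ≠ 0) {a : ℝ} (hax : A x = a • x) : a = 0 := by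
  obtain ⟨C, hC, hA⟩ := hA
  refine lin_quad (C := C) fun t => ?_
  have h1 := hA x t
  have h2 := h.pos hx
  have e : x + t • A x = (1 + t * a) • x := by rw [hax]; ext k; simp; ring
  rw [e, h.2.1] at h1
  have := le_of_mul_le_mul_right h1 h2
  exact (le_abs_self _).trans this

/-- put `u`, `v` in coordinates `i`, `j`. -/
def put2 (i j : Fin m) (x : Fin m → ℝ) (u v : ℝ) : Fin m → ℝ :=
  fun k => if k = i then u else if k = j then v else x k

lemma rot_const (h : IsLatticeNorm N) {i j : Fin m} (hij : i ≠ j)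
    (hA : SkewOp N (fun x k => if k = i then - x j else if k = j then x i else 0))
    (x : Fin m → ℝ) (r : ℝ) (θ : ℝ) :
    N (put2 i j x (r * Real.cos θ) (r * Real.sin θ)) = N (put2 i j x r 0) := by
  obtain ⟨C, hC, hA⟩ := hA
  set φ : ℝ → ℝ := fun θ => N (put2 i j x (r * Real.cos θ) (r * Real.sin θ)) with hφ
  set M := N (put2 i j x r r) with hM
  have hM0 : 0 ≤ M := h.1.nonneg _
  have hb : ∀ θ, φ θ ≤ M := by
    intro θ
    refine h.2.2 _ _ fun k => ?_
    unfold put2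
    split_ifs
    · rw [abs_mul]; exact mul_le_of_le_one_right (abs_nonneg _) (Real.abs_cos_le_one _)
    · rw [abs_mul]; exact mul_le_of_le_one_right (abs_nonneg _) (Real.abs_sin_le_one _)
    · exact le_rfl
  have h1 : ∀ θ δ, |δ| ≤ 1 → φ (θ + δ) - φ θ ≤ 4 * C * M * δ ^ 2 := by
    intro θ δ hδ
    have hc : 1 / 2 ≤ Real.cos δ := by
      have := Real.one_sub_sq_div_two_le_cos (x := δ)
      have : δ ^ 2 ≤ 1 := by rw [← sq_abs]; nlinarith [abs_nonneg δ]
      linarith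
    have hc0 : 0 < Real.cos δ := by linarith
    set t := Real.sin δ / Real.cos δ with ht
    have ht2 : t ^ 2 ≤ 4 * δ ^ 2 := by
      have hs : Real.sin δ ^ 2 ≤ δ ^ 2 := by
        rw [sq_le_sq]; exact Real.abs_sin_le_abs
      rw [ht, div_pow, div_le_iff₀ (by positivity)]
      have hc2 : 1 / 4 ≤ Real.cos δ ^ 2 := by nlinarith
      nlinarith [mul_le_mul_of_nonneg_left hc2 (sq_nonneg δ)]
    have h2 := hA (put2 i j x (r * Real.cos θ) (r * Real.sin θ)) t
    have h3 : φ (θ + δ) ≤ N (put2 i j x (r * Real.cos θ) (r * Real.sin θ) + t • (fun k => if k = i then - (put2 i j x (r * Real.cos θ) (r * Real.sin θ)) j else if k = j then (put2 i j x (r * Real.cos θ) (r * Real.sin θ)) i else 0)) := by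
      refine h.2.2 _ _ fun k => ?_
      have hle : ∀ a : ℝ, |a| ≤ |a / Real.cos δ| := by
        intro a
        rw [abs_div, abs_of_pos hc0, le_div_iff₀ hc0]
        exact mul_le_of_le_one_right (abs_nonneg _) (Real.cos_le_one _)
      by_cases hk : k = i
      · subst hk
        simp only [put2, Pi.add_apply, Pi.smul_apply, if_true, hij.symm, if_false, smul_eq_mul]
        refine (hle _).trans (le_of_eq ?_)
        congr 1
        rw [Real.cos_add, ht]; field_simp; try ring
      · by_cases hk' : k = j
        · subst hk'
          simp only [put2, Pi.add_apply, Pi.smul_apply, if_true, hk, if_false, smul_eq_mul]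
          refine (hle _).trans (le_of_eq ?_)
          congr 1
          rw [Real.sin_add, ht]; field_simp; try ring
        · simp [put2, hk, hk']
    have h4 : φ (θ + δ) ≤ (1 + C * t ^ 2) * φ θ := h3.trans h2
    have h5 : 0 ≤ φ θ := h.1.nonneg _
    have h6 : C * t ^ 2 * φ θ ≤ C * (4 * δ ^ 2) * M := by
      gcongr
      exact hb θ
    linarith
  have hd : ∀ θ, HasDerivAt φ 0 θ := by
    intro θ
    have hO : (fun y => φ y - φ θ) =O[nhds θ] fun y => ‖y - θ‖ ^ 2 := by
      refine Asymptotics.IsBigO.of_bound (4 * C * M) ?_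
      filter_upwards [Metric.ball_mem_nhds θ one_pos] with y hy
      rw [Metric.mem_ball, Real.dist_eq] at hy
      have a1 := h1 θ (y - θ) hy.le
      have a2 := h1 y (θ - y) (by rw [abs_sub_comm]; exact hy.le)
      rw [show θ + (y - θ) = y by ring] at a1
      rw [show y + (θ - y) = θ by ring] at a2
      rw [Real.norm_eq_abs, Real.norm_eq_abs, Real.norm_eq_abs, abs_pow, abs_abs, sq_abs, abs_le]
      constructor <;> nlinarith
    have := (hO.hasFDerivAt (by norm_num)).hasDerivAt
    simpa using this.add_const (φ θ)
  have := is_const_of_deriv_eq_zero (fun θ => (hd θ).differentiableAt) (fun θ => (hd θ).deriv) θ 0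
  simpa [hφ] using this

lemma rot_inv (h : IsLatticeNorm N) {i j : Fin m} (hij : i ≠ j)
    (hA : SkewOp N (fun x k => if k = i then - x j else if k = j then x i else 0))
    (x y : Fin m → ℝ) (hxy : ∀ k, k ≠ i → k ≠ j → x k = y k)
    (hs : x i ^ 2 + x j ^ 2 = y i ^ 2 + y j ^ 2) : N x = N y := by
  have key : ∀ x : Fin m → ℝ, N x = N (put2 i j x (Real.sqrt (x i ^ 2 + x j ^ 2)) 0) := by
    intro x
    set z : ℂ := ⟨x i, x j⟩ with hz
    have hn : ‖z‖ = Real.sqrt (x i ^ 2 + x j ^ 2) := by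
      rw [Complex.norm_def, Complex.normSq_apply]; simp [hz, pow_two]
    have h1 := rot_const h hij hA x ‖z‖ z.arg
    rw [Complex.norm_mul_cos_arg, Complex.norm_mul_sin_arg, hn] at h1
    rw [← h1]
    congr 1
    ext k
    unfold put2
    split_ifs with h1 h2
    · rw [h1]
    · rw [h2]
    · rfl
  rw [key x, key y, hs]
  congr 1
  ext k
  unfold put2
  split_ifs with h1 h2
  · rfl
  · rfl
  · exact hxy k h1 h2

lemma euclid (h : IsSymmLatticeNorm N) {i j : Fin m} (hij : i ≠ j)
    (hA : SkewOp N (fun x k => if k = i then - x j else if k = j then x i else 0)) :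
    ∃ c : ℝ, 0 < c ∧ ∀ x : Fin m → ℝ, N x = c * Real.sqrt (∑ i, x i ^ 2) := by
  have key : ∀ p q : Fin m, p ≠ q → ∀ x y : Fin m → ℝ, (∀ k, k ≠ p → k ≠ q → x k = y k) →
      x p ^ 2 + x q ^ 2 = y p ^ 2 + y q ^ 2 → N x = N y := by
    intro p q hpq x y hxy hs
    obtain ⟨π, hp, hq⟩ : ∃ π : Equiv.Perm (Fin m), π i = p ∧ π j = q := by
      refine ⟨Equiv.swap (Equiv.swap i p j) q * Equiv.swap i p, ?_, ?_⟩
      · have : p ≠ Equiv.swap i p j := by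
          intro h
          apply hij
          apply (Equiv.swap i p).injective
          rw [← h]; simp
        simp [Equiv.swap_apply_of_ne_of_ne this hpq]
      · simp
    rw [← h.2 π x, ← h.2 π y]
    refine rot_inv h.1 hij hA _ _ ?_ ?_
    · intro k hk hk'
      refine hxy _ ?_ ?_
      · rw [← hp]; exact fun e => hk (π.injective e)
      · rw [← hq]; exact fun e => hk' (π.injective e)
    · simp [hp, hq, hs]
  have hne : (Pi.single i 1 : Fin m → ℝ) ≠ 0 := by simp
  refine ⟨N (Pi.single i 1), h.1.1.pos hne, fun x => ?_⟩
  have ind : ∀ s : Finset (Fin m), i ∉ s →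
      N x = N (fun k => if k = i then Real.sqrt (x i ^ 2 + ∑ l ∈ s, x l ^ 2)
        else if k ∈ s then 0 else x k) := by
    intro s
    induction s using Finset.induction_on with
    | empty =>
      intro _
      refine key i j hij _ _ ?_ ?_
      · intro k hk _; simp [hk]
      · simp [hij.symm, Real.sqrt_sq_eq_abs]
    | insert q s hq ih =>
      intro hi
      simp only [Finset.mem_insert, not_or] at hi
      rw [ih hi.2]
      refine key i q hi.1 _ _ ?_ ?_
      · intro k hk hk'
        simp [hk, hk']
      · have a1 : 0 ≤ ∑ l ∈ s, x l ^ 2 := Finset.sum_nonneg fun _ _ => sq_nonneg _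
        simp only [if_true, Ne.symm hi.1, if_false, hq, Finset.mem_insert, true_or,
          Finset.sum_insert hq]
        rw [Real.sq_sqrt (by positivity), Real.sq_sqrt (by positivity)]
        ring
  rw [ind (Finset.univ.erase i) (by simp), Finset.add_sum_erase _ (fun l => x l ^ 2) (Finset.mem_univ i)]
  have e : (fun k => if k = i then Real.sqrt (∑ l, x l ^ 2)
        else if k ∈ Finset.univ.erase i then 0 else x k)
      = Real.sqrt (∑ l, x l ^ 2) • (Pi.single i 1 : Fin m → ℝ) := by
    ext k
    by_cases hk : k = i
    · subst hk; simp
    · simp [hk]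
  rw [e, h.1.1.2.1, abs_of_nonneg (Real.sqrt_nonneg _), mul_comm]

/-- sign change on a set of coordinates -/
def signMap (s : Finset (Fin m)) : (Fin m → ℝ) →ₗ[ℝ] (Fin m → ℝ) where
  toFun x k := if k ∈ s then - x k else x k
  map_add' x y := by ext k; simp only [Pi.add_apply]; split_ifs <;> ring
  map_smul' c x := by
    ext k; simp only [Pi.smul_apply, RingHom.id_apply, smul_eq_mul]; split_ifs <;> ring

lemma signMap_invol (s : Finset (Fin m)) (x) : signMap s (signMap s x) = x := by
  ext k; simp only [signMap, LinearMap.coe_mk, AddHom.coe_mk]; split_ifs <;> simp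

lemma signMap_iso (h : IsLatticeNorm N) (s : Finset (Fin m)) (x) : N (signMap s x) = N x := by
  rw [h.2.1, h.2.1 x]
  congr 1
  ext k; simp only [signMap, LinearMap.coe_mk, AddHom.coe_mk]; split_ifs <;> simp

lemma skew_diag (h : IsLatticeNorm N) (b : (Fin m → ℝ) →ₗ[ℝ] (Fin m → ℝ)) (hb : SkewOp N b)
    (p : Fin m) : b (Pi.single p 1) p = 0 := by
  obtain ⟨C, hC, hb⟩ := hb
  refine lin_quad (C := C) fun t => ?_
  have hne : (Pi.single p 1 : Fin m → ℝ) ≠ 0 := by simp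
  have h2 := h.1.pos hne
  have h1 := hb (Pi.single p 1) t
  have h3 : N ((1 + t * b (Pi.single p 1) p) • (Pi.single p 1 : Fin m → ℝ))
      ≤ N (Pi.single p 1 + t • b (Pi.single p 1)) := by
    refine h.2.2 _ _ fun k => ?_
    by_cases hk : k = p
    · subst hk; simp
    · simp [hk]; positivity
  rw [h.1.2.1] at h3
  exact (le_abs_self _).trans (le_of_mul_le_mul_right (h3.trans h1) h2)

lemma skew_offdiag (h : IsSymmLatticeNorm N)
    (hN2 : ¬ ∃ c : ℝ, 0 < c ∧ ∀ x : Fin m → ℝ, N x = c * Real.sqrt (∑ i, x i ^ 2))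
    (b : (Fin m → ℝ) →ₗ[ℝ] (Fin m → ℝ)) (hb : SkewOp N b)
    {i j : Fin m} (hij : i ≠ j) : b (Pi.single j 1) i = 0 := by
  set D := signMap (m := m) {i, j}
  set E := signMap (m := m) {i}
  have hc : SkewOp N (fun x => b x + D (b (D x))) :=
    hb.add h.1.1 (hb.conj D (signMap_iso h.1 _) (signMap_invol _))
  have hd := hc.add h.1.1 ((hc.conj E (signMap_iso h.1 _) (signMap_invol _)).smul (-1))
  have hd2 := hd.smul (1/4)
  set β := b (Pi.single j 1) i
  set γ := b (Pi.single i 1) j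
  have hdd : SkewOp N (fun x k => if k = i then β * x j else if k = j then γ * x i else 0) := by
    convert hd2 using 1
    ext x k
    simp only [Pi.smul_apply, Pi.add_apply, smul_eq_mul]
    have hDv : ∀ (y : Fin m → ℝ) l, D y l = if l ∈ ({i, j} : Finset (Fin m)) then - y l else y l :=
      fun _ _ => rfl
    have hEv : ∀ (y : Fin m → ℝ) l, E y l = if l ∈ ({i} : Finset (Fin m)) then - y l else y l :=
      fun _ _ => rfl
    by_cases hk : k = i
    · subst hk
      rw [hEv]; simp only [Pi.add_apply, hDv (b _)]
      simp only [Finset.mem_insert, Finset.mem_singleton, true_or, if_true]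
      have e : x - D x + E x - D (E x) = (4 * x j) • (Pi.single j 1 : Fin m → ℝ) := by
        ext l
        simp only [Pi.add_apply, Pi.sub_apply, hDv, hEv, Pi.smul_apply, Pi.single_apply,
          Finset.mem_insert, Finset.mem_singleton, smul_eq_mul]
        by_cases h1 : l = k
        · subst h1; simp [hij]
        · by_cases h2 : l = j
          · subst h2; simp [h1]; ring
          · simp [h1, h2]
      have e2 := congrFun (congrArg b e) k
      simp only [map_add, map_sub, map_smul, Pi.add_apply, Pi.sub_apply, Pi.smul_apply,
        smul_eq_mul] at e2
      linear_combination (-1/4) * e2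
    · by_cases hk' : k = j
      · subst hk'
        rw [hEv]; simp only [Pi.add_apply, hDv (b _)]
        simp only [Finset.mem_insert, Finset.mem_singleton, or_true, if_true, hk, if_false]
        have e : x - D x - E x + D (E x) = (4 * x i) • (Pi.single i 1 : Fin m → ℝ) := by
          ext l
          simp only [Pi.add_apply, Pi.sub_apply, hDv, hEv, Pi.smul_apply, Pi.single_apply,
            Finset.mem_insert, Finset.mem_singleton, smul_eq_mul]
          by_cases h1 : l = i
          · subst h1; simp; ring
          · by_cases h2 : l = k
            · subst h2; simp [h1]
            · simp [h1, h2]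
        have e2 := congrFun (congrArg b e) k
        simp only [map_add, map_sub, map_smul, Pi.add_apply, Pi.sub_apply, Pi.smul_apply,
          smul_eq_mul] at e2
        linear_combination (-1/4) * e2
      · rw [hEv]; simp only [Pi.add_apply, hDv (b _)]
        simp only [Finset.mem_insert, Finset.mem_singleton, hk, hk', or_self, if_false]
        have e : x + D x - E x - D (E x) = 0 := by
          ext l
          simp only [Pi.add_apply, Pi.sub_apply, hDv, hEv, Pi.zero_apply,
            Finset.mem_insert, Finset.mem_singleton]
          by_cases h1 : l = i
          · subst h1; simp
          · by_cases h2 : l = j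
            · subst h2; simp [h1]
            · simp [h1, h2]
        have e2 := congrFun (congrArg b e) k
        simp only [map_add, map_sub, map_zero, Pi.add_apply, Pi.sub_apply, Pi.zero_apply] at e2
        linear_combination (-1/4) * e2
  have hsw := hdd.conj (LinearMap.funLeft ℝ ℝ (Equiv.swap i j)) (fun x => h.2 (Equiv.swap i j) x)
    (fun x => by ext k; simp [LinearMap.funLeft_apply])
  have he := hdd.add h.1.1 (hsw.smul (-1))
  have hβγ : β = γ := by
    by_contra hne
    have hne' : γ - β ≠ 0 := sub_ne_zero.2 (Ne.symm hne)
    apply hN2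
    refine euclid h hij ?_
    convert he.smul (γ - β)⁻¹ using 1
    ext x k
    simp only [Pi.smul_apply, Pi.add_apply, smul_eq_mul, LinearMap.funLeft_apply]
    by_cases hk : k = i
    · subst hk; simp [hij.symm]; field_simp; ring
    · by_cases hk' : k = j
      · subst hk'; simp [hk]; field_simp; ring
      · simp [hk, hk', Equiv.swap_apply_of_ne_of_ne hk hk']
  refine hdd.eigen h.1.1 (x := Pi.single i 1 + Pi.single j 1) ?_ ?_
  · intro h0
    have := congrFun h0 i
    simp [hij] at this
  · ext k
    rw [← hβγ]
    by_cases hk : k = i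
    · subst hk; simp [hij, hij.symm]
    · by_cases hk' : k = j
      · subst hk'; simp [hk, hij]
      · simp [hk, hk']
end norm

section vec
variable {m : ℕ} {N : (Fin m → ℝ) → ℝ} {H : Type*} [NormedAddCommGroup H] [InnerProductSpace ℝ H]

def VSkew (N : (Fin m → ℝ) → ℝ) (B : (Fin m → H) →ₗ[ℝ] (Fin m → H)) : Prop :=
  ∃ C : ℝ, 0 ≤ C ∧ ∀ (f : Fin m → H) (t : ℝ),
    N (fun i => ‖f i + t • B f i‖) ≤ (1 + C * t ^ 2) * N fun i => ‖f i‖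

/-- embedding of scalars along unit vectors -/
def emb (u : Fin m → H) : (Fin m → ℝ) →ₗ[ℝ] (Fin m → H) where
  toFun x k := x k • u k
  map_add' x y := by ext k; simp [add_smul]
  map_smul' c x := by ext k; simp [mul_smul]

/-- projection to scalars along unit vectors -/
def prj (u : Fin m → H) : (Fin m → H) →ₗ[ℝ] (Fin m → ℝ) where
  toFun f k := ⟪u k, f k⟫
  map_add' x y := by ext k; simp [inner_add_right]
  map_smul' c x := by ext k; simp [inner_smul_right]

lemma VSkew.compress (h : IsLatticeNorm N) {B : (Fin m → H) →ₗ[ℝ] (Fin m → H)} (hB : VSkew N B)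
    (u : Fin m → H) (hu : ∀ k, ‖u k‖ = 1) : SkewOp N (prj u ∘ₗ B ∘ₗ emb u) := by
  obtain ⟨C, hC, hB⟩ := hB
  refine ⟨C, hC, fun x t => ?_⟩
  have h1 := hB (emb u x) t
  have e : N (fun k => ‖emb u x k‖) = N x := by
    rw [h.2.1 x]; congr 1; ext k; simp [emb, norm_smul, hu]
  rw [e] at h1
  refine le_trans (h.2.2 _ _ fun k => ?_) h1
  have e2 : (x + t • (prj u ∘ₗ B ∘ₗ emb u) x) k = ⟪u k, emb u x k + t • B (emb u x) k⟫ := by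
    simp [prj, inner_add_right, inner_smul_right, emb, real_inner_self_eq_norm_sq, hu]
  change |(x + t • (prj u ∘ₗ B ∘ₗ emb u) x) k| ≤ _
  rw [e2, abs_norm]
  refine (abs_real_inner_le_norm _ _).trans ?_
  rw [hu, one_mul]

lemma emb_single (u : Fin m → H) (p : Fin m) : emb u (Pi.single p 1) = Pi.single p (u p) := by
  ext k
  by_cases hk : k = p
  · subst hk; simp [emb]
  · simp [emb, hk]

lemma VSkew.diag (h : IsLatticeNorm N) {B : (Fin m → H) →ₗ[ℝ] (Fin m → H)} (hB : VSkew N B)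
    (p : Fin m) (g : H) : ⟪g, B (Pi.single p g) p⟫ = 0 := by
  by_cases hg : g = 0
  · simp [hg]
  have hg' : ‖g‖ ≠ 0 := norm_ne_zero_iff.2 hg
  have h1 := skew_diag h _ (hB.compress h (fun _ => ‖g‖⁻¹ • g)
    (fun _ => by simp [norm_smul, hg'])) p
  simp only [LinearMap.comp_apply, emb_single] at h1
  rw [Pi.single_smul, map_smul] at h1
  simpa [prj, inner_smul_left, inner_smul_right, hg'] using h1

lemma VSkew.offdiag (h : IsSymmLatticeNorm N)
    (hN2 : ¬ ∃ c : ℝ, 0 < c ∧ ∀ x : Fin m → ℝ, N x = c * Real.sqrt (∑ i, x i ^ 2))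
    {B : (Fin m → H) →ₗ[ℝ] (Fin m → H)} (hB : VSkew N B)
    {p q : Fin m} (hpq : p ≠ q) (g : H) : B (Pi.single q g) p = 0 := by
  by_contra hw
  have hg : g ≠ 0 := by rintro rfl; simp at hw
  have hg' : ‖g‖ ≠ 0 := norm_ne_zero_iff.2 hg
  obtain ⟨w, hwd⟩ : ∃ w, w = B (Pi.single q g) p := ⟨_, rfl⟩
  rw [← hwd] at hw
  have hw' : ‖w‖ ≠ 0 := norm_ne_zero_iff.2 hw
  have h1 := skew_offdiag h hN2 _ (hB.compress h.1 (fun k => if k = q then ‖g‖⁻¹ • g else ‖w‖⁻¹ • w)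
    (fun k => by split_ifs <;> simp [norm_smul, hg', hw'])) hpq
  simp only [LinearMap.comp_apply, emb_single, if_true] at h1
  rw [Pi.single_smul, map_smul] at h1
  have h2 : ⟪w, w⟫ = 0 := by
    simpa [prj, inner_smul_left, inner_smul_right, hpq, hg, hw, ← hwd, -inner_self_eq_zero] using h1
  exact hw (inner_self_eq_zero.1 h2)

/-- the rank two skew operator at coordinate `i` -/
def wedge (i : Fin m) (h k : H) : (Fin m → H) →ₗ[ℝ] (Fin m → H) where
  toFun f := Pi.single i (⟪h, f i⟫ • k - ⟪k, f i⟫ • h)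
  map_add' x y := by
    rw [← Pi.single_add]; congr 1; simp [inner_add_right, add_smul]; abel
  map_smul' c x := by
    rw [RingHom.id_apply, ← Pi.single_smul]; congr 1
    simp [inner_smul_right, mul_smul, smul_sub]

lemma wedge_skew (hN : IsLatticeNorm N) (i : Fin m) (h k : H) : VSkew N (wedge i h k) := by
  set K := 2 * (‖h‖ * ‖k‖) with hK
  refine ⟨K ^ 2, by positivity, fun f t => ?_⟩
  have e : N ((1 + K ^ 2 * t ^ 2) • fun i => ‖f i‖) = (1 + K ^ 2 * t ^ 2) * N fun i => ‖f i‖ := by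
    rw [hN.1.2.1, abs_of_nonneg (by positivity)]
  rw [← e]
  refine hN.2.2 _ _ fun l => ?_
  rw [abs_norm, Pi.smul_apply, smul_eq_mul, abs_of_nonneg (by positivity)]
  by_cases hl : l = i
  · subst hl
    set v := f l
    have e1 : wedge l h k f l = ⟪h, v⟫ • k - ⟪k, v⟫ • h := by simp [wedge, v]
    rw [e1]
    set A := ⟪h, v⟫ • k - ⟪k, v⟫ • h with hA
    have hAn : ‖A‖ ≤ K * ‖v‖ := by
      refine (norm_sub_le _ _).trans ?_
      rw [norm_smul, norm_smul]
      have a1 := norm_inner_le_norm (𝕜 := ℝ) h v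
      have a2 := norm_inner_le_norm (𝕜 := ℝ) k v
      have a3 := mul_le_mul_of_nonneg_right a1 (norm_nonneg k)
      have a4 := mul_le_mul_of_nonneg_right a2 (norm_nonneg h)
      rw [hK]; linarith
    have hin : ⟪v, A⟫ = 0 := by
      rw [hA, inner_sub_right, inner_smul_right, inner_smul_right, real_inner_comm, real_inner_comm k]
      ring
    have hsq : ‖v + t • A‖ ^ 2 = ‖v‖ ^ 2 + t ^ 2 * ‖A‖ ^ 2 := by
      rw [norm_add_sq_real, inner_smul_right, hin, norm_smul, mul_pow, Real.norm_eq_abs, sq_abs]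
      ring
    have hA2 : ‖A‖ ^ 2 ≤ K ^ 2 * ‖v‖ ^ 2 := by
      rw [← mul_pow]; exact pow_le_pow_left₀ (norm_nonneg _) hAn 2
    refine le_of_sq_le_sq ?_ (by positivity)
    rw [hsq]
    have h5 : t ^ 2 * ‖A‖ ^ 2 ≤ t ^ 2 * (K ^ 2 * ‖v‖ ^ 2) := by gcongr
    have h6 : 0 ≤ (K ^ 2 * t ^ 2) * ‖v‖ ^ 2 := by positivity
    have h7 : 0 ≤ (K ^ 2 * t ^ 2) ^ 2 * ‖v‖ ^ 2 := by positivity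
    nlinarith
  · have e1 : wedge i h k f l = 0 := by simp [wedge, hl]
    rw [e1, smul_zero, add_zero]
    have : 0 ≤ K ^ 2 * t ^ 2 * ‖f l‖ := by positivity
    linarith

end vec

theorem surjective_isometry_preserves_vector_disjointness_of_infinite_dim
    {m : ℕ} (hm : 2 ≤ m) (N : (Fin m → ℝ) → ℝ)
    (hN : IsSymmLatticeNorm N)
    (hN2 : ¬ ∃ c : ℝ, 0 < c ∧ ∀ x : Fin m → ℝ, N x = c * Real.sqrt (∑ i, x i ^ 2))
    {H : Type*} [NormedAddCommGroup H] [InnerProductSpace ℝ H] [CompleteSpace H]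
    [TopologicalSpace.SeparableSpace H] (hinf : ¬ FiniteDimensional ℝ H)
    (T : (Fin m → H) →ₗ[ℝ] (Fin m → H))
    (hTsurj : Function.Surjective T)
    (hTiso : ∀ f : Fin m → H, N (fun i => ‖T f i‖) = N fun i => ‖f i‖)
    (f g : Fin m → H) (hfg : ∀ i, ‖f i‖ * ‖g i‖ = 0) :
    ∀ i, ‖T f i‖ * ‖T g i‖ = 0 := by
  have hlat := hN.1
  have hinj : Function.Injective T := by
    rw [injective_iff_map_eq_zero]
    intro a ha
    have h1 := hTiso a
    rw [ha] at h1
    have h2 : N (fun _ : Fin m => ‖(0 : H)‖) = 0 := (hlat.1.1 _).2 (by ext; simp)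
    have h3 : N (fun i => ‖a i‖) = 0 := by rw [← h1]; exact h2
    have h4 := (hlat.1.1 _).1 h3
    ext i
    simpa using congrFun h4 i
  let Te := LinearEquiv.ofBijective T ⟨hinj, hTsurj⟩
  let S : (Fin m → H) →ₗ[ℝ] (Fin m → H) := Te.symm
  have hTS : ∀ x, T (S x) = x := fun x => Te.apply_symm_apply x
  have hST : ∀ x, S (T x) = x := fun x => Te.symm_apply_apply x
  have hSiso : ∀ f : Fin m → H, N (fun i => ‖S f i‖) = N fun i => ‖f i‖ := by
    intro f; rw [← hTiso (S f), hTS]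
  have hsk : ∀ i h k, VSkew N (T ∘ₗ wedge i h k ∘ₗ S) := by
    intro i h k
    obtain ⟨C, hC, hw⟩ := wedge_skew hlat i h k
    refine ⟨C, hC, fun f t => ?_⟩
    have h1 := hw (S f) t
    have h2 := hTiso (S f + t • wedge i h k (S f))
    simp only [Pi.add_apply, Pi.smul_apply] at h2
    rw [hSiso, ← h2] at h1
    simpa [hTS] using h1
  have hval : ∀ i h k g, (T ∘ₗ wedge i h k ∘ₗ S) g
      = ⟪h, S g i⟫ • T (Pi.single i k) - ⟪k, S g i⟫ • T (Pi.single i h) := by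
    intro i h k g
    simp only [LinearMap.comp_apply]
    rw [← map_smul, ← map_smul, ← map_sub, ← Pi.single_smul, ← Pi.single_smul, ← Pi.single_sub]
    rfl
  have hoff : ∀ i p q, p ≠ q → ∀ h k g, ⟪h, S (Pi.single q g) i⟫ • T (Pi.single i k) p
      = ⟪k, S (Pi.single q g) i⟫ • T (Pi.single i h) p := by
    intro i p q hpq h k g
    have := (hsk i h k).offdiag hN hN2 hpq g
    rw [hval] at this
    simpa [sub_eq_zero] using this
  have hdiag : ∀ i p h k g, ⟪h, S (Pi.single p g) i⟫ * ⟪g, T (Pi.single i k) p⟫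
      = ⟪k, S (Pi.single p g) i⟫ * ⟪g, T (Pi.single i h) p⟫ := by
    intro i p h k g
    have := (hsk i h k).diag hlat p g
    rw [hval] at this
    simpa [inner_sub_right, inner_smul_right, sub_eq_zero] using this
  have hdec : ∀ (R : (Fin m → H) →ₗ[ℝ] (Fin m → H)) (x : Fin m → H) p,
      R x p = ∑ l, R (Pi.single l (x l)) p := by
    intro R x p
    conv_lhs => rw [← Finset.univ_sum_single x, map_sum, Finset.sum_apply]
  -- main structural claim
  have hmain : ∀ i p k, T (Pi.single i k) p ≠ 0 → ∀ q, q ≠ p → ∀ g, S (Pi.single q g) i = 0 := by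
    intro i p k hk q hq g
    by_contra hw
    set w := S (Pi.single q g) i with hwdef
    have hTw : T (Pi.single i w) p ≠ 0 := by
      intro h0
      have := hoff i p q hq.symm w k g
      rw [← hwdef, h0, smul_zero, smul_eq_zero] at this
      rcases this with h1 | h1
      · exact hw (inner_self_eq_zero.1 h1)
      · exact hk h1
    set v := T (Pi.single i w) p with hv
    -- any vector orthogonal to `w` is killed by `T_{pi}`
    have hker : ∀ h, ⟪h, w⟫ = 0 → T (Pi.single i h) p = 0 := by
      intro h hh
      have := hoff i p q hq.symm h w g
      rw [← hwdef, hh, zero_smul] at this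
      have := smul_eq_zero.1 this.symm
      exact this.resolve_left (fun h1 => hw (inner_self_eq_zero.1 h1))
    have hall : ∀ h, ⟪h, w⟫ = 0 → ∀ x, ⟪h, S x i⟫ = 0 := by
      intro h hh x
      rw [hdec S x i, inner_sum]
      refine Finset.sum_eq_zero fun l _ => ?_
      by_cases hl : l = p
      · subst hl
        have hnz : ∀ g', ⟪g', v⟫ ≠ 0 → ⟪h, S (Pi.single l g') i⟫ = 0 := by
          intro g' hg'
          have := hdiag i l h w g'
          rw [hker h hh, inner_zero_right, mul_zero] at this
          exact (mul_eq_zero.1 this).resolve_right hg'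
        have hvv : ⟪v, v⟫ ≠ 0 := fun h1 => hTw (inner_self_eq_zero.1 h1)
        by_cases hx : ⟪x l, v⟫ = 0
        · have h1 := hnz (x l + v) (by rw [inner_add_left, hx, zero_add]; exact hvv)
          rw [Pi.single_add, map_add, Pi.add_apply, inner_add_right, hnz v hvv, add_zero] at h1
          exact h1
        · exact hnz _ hx
      · have := hoff i p l (Ne.symm hl) h w (x l)
        rw [hker h hh, smul_zero, smul_eq_zero] at this
        exact this.resolve_right hTw
    -- contradiction with dimension
    obtain ⟨h, hh, hh0⟩ : ∃ h : H, ⟪h, w⟫ = 0 ∧ h ≠ 0 := by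
      by_contra hcon
      push Not at hcon
      apply hinf
      refine Module.finite_def.2 ⟨{w}, ?_⟩
      rw [eq_top_iff]
      intro y _
      rw [Finset.coe_singleton, Submodule.mem_span_singleton]
      refine ⟨⟪y, w⟫ / ⟪w, w⟫, ?_⟩
      have hww : ⟪w, w⟫ ≠ 0 := fun h1 => hw (inner_self_eq_zero.1 h1)
      have := hcon (y - (⟪y, w⟫ / ⟪w, w⟫) • w) (by
        rw [inner_sub_left, real_inner_smul_left, div_mul_cancel₀ _ hww, sub_self])
      exact (sub_eq_zero.1 this).symm
    have := hall h hh (T (Pi.single i h))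
    rw [hST, Pi.single_eq_same] at this
    exact hh0 (inner_self_eq_zero.1 this)
  obtain ⟨e, he⟩ : ∃ e : H, e ≠ 0 := by
    by_contra hcon
    push Not at hcon
    apply hinf
    have : Subsingleton H := ⟨fun a b => by rw [hcon a, hcon b]⟩
    infer_instance
  have huniq : ∀ i p p' k k', T (Pi.single i k) p ≠ 0 → T (Pi.single i k') p' ≠ 0 → p = p' := by
    intro i p p' k k' h1 h2
    by_contra hpp
    have hz : ∀ x, S x i = 0 := by
      intro x
      rw [hdec S x i]
      refine Finset.sum_eq_zero fun l _ => ?_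
      by_cases hl : l = p
      · exact hmain i p' k' h2 l (by rw [hl]; exact hpp) _
      · exact hmain i p k h1 l hl _
    have := hz (T (Pi.single i e))
    rw [hST, Pi.single_eq_same] at this
    exact he this
  have hex : ∀ (x : Fin m → H) p, T x p ≠ 0 → ∃ i, T (Pi.single i (x i)) p ≠ 0 := by
    intro x p hx
    rw [hdec T x p] at hx
    obtain ⟨i, _, hi⟩ := Finset.exists_ne_zero_of_sum_ne_zero hx
    exact ⟨i, hi⟩
  have hrow : ∀ p, ∃ i k, T (Pi.single i k) p ≠ 0 := by
    intro p
    obtain ⟨x, hx⟩ := hTsurj (Pi.single p e)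
    obtain ⟨i, hi⟩ := hex x p (by rw [hx, Pi.single_eq_same]; exact he)
    exact ⟨i, _, hi⟩
  choose τ κ hτ using hrow
  have hτinj : Function.Injective τ := by
    intro p p' hpp
    refine huniq (τ p) p p' (κ p) (κ p') (hτ p) ?_
    rw [hpp]; exact hτ p'
  have hτsurj : Function.Surjective τ := Finite.surjective_of_injective hτinj
  have hτeq : ∀ i p k, T (Pi.single i k) p ≠ 0 → i = τ p := by
    intro i p k hk
    obtain ⟨p', rfl⟩ := hτsurj i
    rw [huniq _ _ _ _ _ hk (hτ p')]
  intro p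
  by_contra hcon
  rw [mul_eq_zero, not_or, norm_eq_zero, norm_eq_zero] at hcon
  obtain ⟨i, hi⟩ := hex f p hcon.1
  obtain ⟨i', hi'⟩ := hex g p hcon.2
  have e1 := hτeq _ _ _ hi
  have e2 := hτeq _ _ _ hi'
  rw [← e1] at e2
  subst e2
  rcases mul_eq_zero.1 (hfg i') with h0 | h0
  · rw [norm_eq_zero.1 h0] at hi; simp at hi
  · rw [norm_eq_zero.1 h0] at hi'; simp at hi'
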